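/- Let a > √3 and λ > 0. Let M_L⁻, M_L⁺, M_R⁻, M_R⁺ ∈ ℝ⁵ each be of two-node Gaussian-EQMOM form (each with its own parameters having positive weights and positive σ), with flux vectors F(·) and wave speeds δ⁺(·) = max{v₁ + aσ, v₂ + aσ, 0}, δ⁻(·) = min{v₁ − aσ, v₂ − aσ, 0}. Set δ_L⁺ = max{δ⁺(M_L⁻), δ⁺(M_L⁺)}, δ_L⁻ = min{δ⁻(M_L⁻), δ⁻(M_L⁺)}, and similarly δ_R⁺, δ_R⁻, and let F̂_L = F̂(M_L⁻, M_L⁺) and F̂_R = F̂(M_R⁻, M_R⁺) be the HLL fluxes. Let M̄ = ½(M_L⁺ + M_R⁻) and M_new = M̄ − λ(F̂_R − F̂_L). If λ(δ_L⁺ − δ_L⁻) ≤ ½ and λ(δ_R⁺ − δ_R⁻) ≤ ½, then H₂(M_new) is positive definite. -/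

import Mathlib

open MeasureTheory Real

/-- The `k`-th moment `Δ_k(v, s²)` of the normal distribution with mean `v` and variance `s²`. -/
noncomputable def gaussMoment (v s : ℝ) (k : ℕ) : ℝ :=
  ∫ x : ℝ, x ^ k * ((2 * π * s ^ 2) ^ (-(1 : ℝ) / 2) * Real.exp (-(x - v) ^ 2 / (2 * s ^ 2)))

/-- The `3×3` Hankel matrix `H₂(c)` of a vector `c ∈ ℝ⁵`, with `(j,k)` entry `c_{j+k}`. -/
noncomputable def hankel2 (c : Fin 5 → ℝ) : Matrix (Fin 3) (Fin 3) ℝ :=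
  Matrix.of fun j k => c ⟨j.1 + k.1, by have := j.isLt; have := k.isLt; omega⟩

/-- Parameters of a two-node Gaussian-EQMOM state: positive weights and positive `σ`. -/
structure EqmomParams where
  r1 : ℝ
  r2 : ℝ
  v1 : ℝ
  v2 : ℝ
  sig : ℝ
  hr1 : 0 < r1
  hr2 : 0 < r2
  hsig : 0 < sig

/-- Moment vector `M_k = ρ₁Δ_k(v₁,σ²) + ρ₂Δ_k(v₂,σ²)`, `k = 0,…,4`. -/
noncomputable def EqmomParams.M (W : EqmomParams) : Fin 5 → ℝ :=
  fun k => W.r1 * gaussMoment W.v1 W.sig k.1 + W.r2 * gaussMoment W.v2 W.sig k.1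

/-- Flux vector `F(M) = (M₁,…,M₄,M₅)` with `M₅ = ρ₁Δ₅(v₁,σ²) + ρ₂Δ₅(v₂,σ²)`. -/
noncomputable def EqmomParams.F (W : EqmomParams) : Fin 5 → ℝ :=
  fun k => W.r1 * gaussMoment W.v1 W.sig (k.1 + 1) + W.r2 * gaussMoment W.v2 W.sig (k.1 + 1)

/-- Wave speed `δ⁺(M) = max{v₁+aσ, v₂+aσ, 0}`. -/
noncomputable def EqmomParams.dp (W : EqmomParams) (a : ℝ) : ℝ :=
  max (max (W.v1 + a * W.sig) (W.v2 + a * W.sig)) 0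

/-- Wave speed `δ⁻(M) = min{v₁−aσ, v₂−aσ, 0}`. -/
noncomputable def EqmomParams.dm (W : EqmomParams) (a : ℝ) : ℝ :=
  min (min (W.v1 - a * W.sig) (W.v2 - a * W.sig)) 0

/-- HLL numerical flux
`F̂(M⁻,M⁺) = (δ̂⁺F(M⁻) − δ̂⁻F(M⁺) + δ̂⁺δ̂⁻(M⁺ − M⁻))/(δ̂⁺ − δ̂⁻)`. -/
noncomputable def hllFlux (dp dm : ℝ) (Mm Mp Fm Fp : Fin 5 → ℝ) : Fin 5 → ℝ :=
  fun k => (dp * Fm k - dm * Fp k + dp * dm * (Mp k - Mm k)) / (dp - dm)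

/-!
A Gaussian moment of order at most five is a three-point Gauss–Hermite sum with nodes `v` and
`v ± √3 σ`. As `a > √3`, all nodes lie strictly inside the band of wave speeds, so `F − δ⁻ M` and
`δ⁺ M − F` are moment vectors of positive measures with at least three atoms, which have positive
definite Hankel matrices. The vectors `c` with `H₂(c)` positive definite form a convex cone.

If a convex cone contains `F − δ̂⁻ M` and `δ̂⁺ M − F` for the two states at an interface, then it
contains `F̂ − δ̂⁻ M⁺` and `δ̂⁺ M⁻ − F̂`. Under the CFL condition it therefore contains
`½ M⁺ + λ F̂` and `½ M⁻ − λ F̂`; the update is a sum of one vector of either kind.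
-/

section ConvexCone

variable {E : Type*} [AddCommGroup E] [Module ℝ E] {K : ConvexCone ℝ E}

lemma convexCone_smul_add_smul_mem {x y : E} (hx : x ∈ K) (hy : y ∈ K) {b c : ℝ}
    (hb : 0 ≤ b) (hc : 0 ≤ c) (hbc : 0 < b + c) : b • x + c • y ∈ K := by
  rcases hb.eq_or_lt with rfl | hb
  · simpa using K.smul_mem (by simpa using hbc) hy
  rcases hc.eq_or_lt with rfl | hc
  · simpa using K.smul_mem hb hx
  exact K.add_mem (K.smul_mem hb hx) (K.smul_mem hc hy)

/-- The state `M` with flux `F` has its wave speeds between `dm` and `dp`, where positivity is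
membership in the convex cone `K`. If `M` and `F` are the moment vectors of `μ(dx)` and
`x μ(dx)`, then `F - dm • M` and `dp • M - F` are those of `(x - dm) μ(dx)` and
`(dp - x) μ(dx)`. -/
structure WaveSpeedBounds (K : ConvexCone ℝ E) (dp dm : ℝ) (M F : E) : Prop where
  lower : F - dm • M ∈ K
  upper : dp • M - F ∈ K

namespace WaveSpeedBounds

variable {dp dm : ℝ} {M F M' F' : E}

lemma mem (h : WaveSpeedBounds K dp dm M F) (hd : dm < dp) : M ∈ K := by
  rw [← K.smul_mem_iff (sub_pos.2 hd)]
  convert K.add_mem h.lower h.upper using 1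
  module

lemma add (h : WaveSpeedBounds K dp dm M F) (h' : WaveSpeedBounds K dp dm M' F') :
    WaveSpeedBounds K dp dm (M + M') (F + F') where
  lower := by
    convert K.add_mem h.lower h'.lower using 1
    module
  upper := by
    convert K.add_mem h.upper h'.upper using 1
    module

lemma smul (h : WaveSpeedBounds K dp dm M F) {r : ℝ} (hr : 0 < r) :
    WaveSpeedBounds K dp dm (r • M) (r • F) where
  lower := by
    convert K.smul_mem hr h.lower using 1
    module
  upper := by
    convert K.smul_mem hr h.upper using 1
    module

end WaveSpeedBounds

end ConvexCone

section HLL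

variable {K : ConvexCone ℝ (Fin 5 → ℝ)} {dp dm lam : ℝ} {Mm Mp Fm Fp : Fin 5 → ℝ}

lemma hllFlux_sub_smul (hd : dm < dp) :
    hllFlux dp dm Mm Mp Fm Fp - dm • Mp
      = (dp - dm)⁻¹ • (dp • (Fm - dm • Mm) + (-dm) • (Fp - dm • Mp)) := by
  have hd' : dp - dm ≠ 0 := (sub_pos.2 hd).ne'
  ext k
  simp only [hllFlux, Pi.sub_apply, Pi.add_apply, Pi.smul_apply, smul_eq_mul]
  field_simp
  ring

lemma smul_sub_hllFlux (hd : dm < dp) :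
    dp • Mm - hllFlux dp dm Mm Mp Fm Fp
      = (dp - dm)⁻¹ • (dp • (dp • Mm - Fm) + (-dm) • (dp • Mp - Fp)) := by
  have hd' : dp - dm ≠ 0 := (sub_pos.2 hd).ne'
  ext k
  simp only [hllFlux, Pi.sub_apply, Pi.add_apply, Pi.smul_apply, smul_eq_mul]
  field_simp
  ring

lemma hllFlux_sub_smul_mem (hdp : 0 ≤ dp) (hdm : dm ≤ 0) (hd : dm < dp)
    (hm : Fm - dm • Mm ∈ K) (hp : Fp - dm • Mp ∈ K) :
    hllFlux dp dm Mm Mp Fm Fp - dm • Mp ∈ K := by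
  rw [hllFlux_sub_smul hd]
  exact K.smul_mem (inv_pos.2 (sub_pos.2 hd))
    (convexCone_smul_add_smul_mem hm hp hdp (neg_nonneg.2 hdm) (by linarith))

lemma smul_sub_hllFlux_mem (hdp : 0 ≤ dp) (hdm : dm ≤ 0) (hd : dm < dp)
    (hm : dp • Mm - Fm ∈ K) (hp : dp • Mp - Fp ∈ K) :
    dp • Mm - hllFlux dp dm Mm Mp Fm Fp ∈ K := by
  rw [smul_sub_hllFlux hd]
  exact K.smul_mem (inv_pos.2 (sub_pos.2 hd))
    (convexCone_smul_add_smul_mem hm hp hdp (neg_nonneg.2 hdm) (by linarith))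

lemma half_smul_add_smul_hllFlux_mem (hlam : 0 < lam) (hdp : 0 ≤ dp) (hdm : dm ≤ 0)
    (hd : dm < dp) (hCFL : lam * (dp - dm) ≤ 1 / 2)
    (hm : WaveSpeedBounds K dp dm Mm Fm) (hp : WaveSpeedBounds K dp dm Mp Fp) :
    (1 / 2 : ℝ) • Mp + lam • hllFlux dp dm Mm Mp Fm Fp ∈ K := by
  have hcoef : 0 ≤ 1 / 2 + lam * dm := by nlinarith
  convert convexCone_smul_add_smul_mem (hllFlux_sub_smul_mem hdp hdm hd hm.lower hp.lower)
    (hp.mem hd) hlam.le hcoef (by linarith) using 1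
  module

lemma half_smul_sub_smul_hllFlux_mem (hlam : 0 < lam) (hdp : 0 ≤ dp) (hdm : dm ≤ 0)
    (hd : dm < dp) (hCFL : lam * (dp - dm) ≤ 1 / 2)
    (hm : WaveSpeedBounds K dp dm Mm Fm) (hp : WaveSpeedBounds K dp dm Mp Fp) :
    (1 / 2 : ℝ) • Mm - lam • hllFlux dp dm Mm Mp Fm Fp ∈ K := by
  have hcoef : 0 ≤ 1 / 2 - lam * dp := by nlinarith
  convert convexCone_smul_add_smul_mem (smul_sub_hllFlux_mem hdp hdm hd hm.upper hp.upper)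
    (hm.mem hd) hlam.le hcoef (by linarith) using 1
  module

end HLL

section Hankel

/-- The convex cone of vectors `c ∈ ℝ⁵` whose Hankel matrix `H₂(c)` is positive definite: the
interior of the moment cone in degree four. -/
def hankelPosDefCone : ConvexCone ℝ (Fin 5 → ℝ) where
  carrier := {c | (hankel2 c).PosDef}
  smul_mem' _ hr _ hc := Matrix.PosDef.smul hc hr
  add_mem' _ hc _ hc' := Matrix.PosDef.add hc hc'

lemma mem_hankelPosDefCone {c : Fin 5 → ℝ} : c ∈ hankelPosDefCone ↔ (hankel2 c).PosDef := Iff.rfl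

variable {w y : Fin 3 → ℝ} {dp dm : ℝ}

lemma hankel2_sum_mul_pow (w y : Fin 3 → ℝ) :
    hankel2 (fun k => ∑ i, w i * y i ^ (k : ℕ))
      = (Matrix.vandermonde y).conjTranspose * Matrix.diagonal w * Matrix.vandermonde y := by
  ext j k
  rw [Matrix.mul_apply]
  simp only [hankel2, Matrix.of_apply, Matrix.mul_diagonal, Matrix.conjTranspose_apply,
    Matrix.vandermonde_apply, star_trivial]
  exact Finset.sum_congr rfl fun i _ => by ring

lemma sum_mul_pow_mem_hankelPosDefCone (hw : ∀ i, 0 < w i) (hy : Function.Injective y) :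
    (fun k : Fin 5 => ∑ i, w i * y i ^ (k : ℕ)) ∈ hankelPosDefCone := by
  have hV : IsUnit (Matrix.vandermonde y) :=
    (Matrix.isUnit_iff_isUnit_det _).2 (Matrix.det_vandermonde_ne_zero_iff.2 hy).isUnit
  rw [mem_hankelPosDefCone, hankel2_sum_mul_pow]
  exact (Matrix.PosDef.diagonal hw).conjTranspose_mul_mul_same
    (Matrix.mulVec_injective_iff_isUnit.2 hV)

lemma waveSpeedBounds_sum_mul_pow (hw : ∀ i, 0 < w i) (hy : Function.Injective y)
    (hband : ∀ i, y i ∈ Set.Ioo dm dp) :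
    WaveSpeedBounds hankelPosDefCone dp dm (fun k : Fin 5 => ∑ i, w i * y i ^ (k : ℕ))
      (fun k : Fin 5 => ∑ i, w i * y i ^ (k + 1 : ℕ)) where
  lower := by
    convert sum_mul_pow_mem_hankelPosDefCone (w := fun i => w i * (y i - dm))
      (fun i => mul_pos (hw i) (sub_pos.2 (hband i).1)) hy using 1
    ext k
    simp only [Pi.sub_apply, Pi.smul_apply, smul_eq_mul, Finset.mul_sum, ← Finset.sum_sub_distrib]
    exact Finset.sum_congr rfl fun i _ => by ring
  upper := by
    convert sum_mul_pow_mem_hankelPosDefCone (w := fun i => w i * (dp - y i))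
      (fun i => mul_pos (hw i) (sub_pos.2 (hband i).2)) hy using 1
    ext k
    simp only [Pi.sub_apply, Pi.smul_apply, smul_eq_mul, Finset.mul_sum, ← Finset.sum_sub_distrib]
    exact Finset.sum_congr rfl fun i _ => by ring

end Hankel

section GaussianReal

open ProbabilityTheory

variable (m : ℝ) (v : NNReal)

lemma hasDerivAt_integral_pow_mul_exp_gaussianReal (n : ℕ) (t : ℝ) :
    HasDerivAt (fun t => ∫ x, x ^ n * exp (t * x) ∂gaussianReal m v)
      (∫ x, x ^ (n + 1) * exp (t * x) ∂gaussianReal m v) t :=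
  hasDerivAt_integral_pow_mul_exp_real (X := id) (by simp [integrableExpSet_id_gaussianReal]) n

lemma integral_mul_exp_gaussianReal (t : ℝ) :
    ∫ x, x * exp (t * x) ∂gaussianReal m v
      = (m + v * t) * ∫ x, exp (t * x) ∂gaussianReal m v := by
  have hmgf : (fun t => ∫ x, exp (t * x) ∂gaussianReal m v)
      = fun t => exp (m * t + v * t ^ 2 / 2) := mgf_id_gaussianReal
  have hexponent : HasDerivAt (fun t : ℝ => m * t + v * t ^ 2 / 2) (m + v * t) t := by
    convert! ((hasDerivAt_id t).const_mul m).add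
      (((hasDerivAt_pow 2 t).const_mul (v : ℝ)).div_const 2) using 1
    push_cast
    ring
  have hderiv := hasDerivAt_integral_pow_mul_exp_gaussianReal m v 0 t
  simp only [pow_zero, one_mul, zero_add, pow_one] at hderiv
  rw [hmgf] at hderiv
  rw [congrFun hmgf t, mul_comm]
  exact hderiv.unique hexponent.exp

/- The tilt by `exp (t * x)` makes the recursion provable by induction: differentiating it in `t`
gives the next one. -/
lemma integral_pow_add_two_mul_exp_gaussianReal (n : ℕ) (t : ℝ) :
    ∫ x, x ^ (n + 2) * exp (t * x) ∂gaussianReal m v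
      = (m + v * t) * ∫ x, x ^ (n + 1) * exp (t * x) ∂gaussianReal m v
        + (n + 1) * v * ∫ x, x ^ n * exp (t * x) ∂gaussianReal m v := by
  have hlin (t : ℝ) : HasDerivAt (fun t : ℝ => m + v * t) v t := by
    simpa using ((hasDerivAt_id t).const_mul (v : ℝ)).const_add m
  have hmoment := hasDerivAt_integral_pow_mul_exp_gaussianReal m v
  induction n generalizing t with
  | zero =>
    have hone (t : ℝ) : ∫ x, x ^ 1 * exp (t * x) ∂gaussianReal m v
        = (m + v * t) * ∫ x, x ^ 0 * exp (t * x) ∂gaussianReal m v := by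
      simpa only [pow_one, pow_zero, one_mul] using integral_mul_exp_gaussianReal m v t
    have hleft := hmoment 1 t
    rw [funext hone] at hleft
    rw [hleft.unique ((hlin t).mul (hmoment 0 t))]
    push_cast
    ring
  | succ n ih =>
    have hleft := hmoment (n + 2) t
    rw [funext ih] at hleft
    rw [hleft.unique (((hlin t).mul (hmoment (n + 1) t)).add
      ((hmoment n t).const_mul ((n + 1) * v : ℝ)))]
    push_cast
    ring

end GaussianReal

section GaussHermite

variable {s : ℝ}

lemma gaussMoment_eq_integral_gaussianReal (v : ℝ) (hs : s ≠ 0) (k : ℕ) :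
    gaussMoment v s k = ∫ x, x ^ k ∂ProbabilityTheory.gaussianReal v (s ^ 2).toNNReal := by
  have hvar : (s ^ 2).toNNReal ≠ 0 := (toNNReal_pos.2 (by positivity)).ne'
  rw [ProbabilityTheory.integral_gaussianReal_eq_integral_smul hvar]
  refine integral_congr_ae (.of_forall fun x => ?_)
  simp only [ProbabilityTheory.gaussianPDFReal_def, coe_toNNReal _ (sq_nonneg s), smul_eq_mul]
  rw [sqrt_eq_rpow, ← rpow_neg (by positivity), neg_div]
  ring

lemma gaussMoment_zero (v : ℝ) (hs : s ≠ 0) : gaussMoment v s 0 = 1 := by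
  simp [gaussMoment_eq_integral_gaussianReal v hs]

lemma gaussMoment_one (v : ℝ) (hs : s ≠ 0) : gaussMoment v s 1 = v := by
  simp [gaussMoment_eq_integral_gaussianReal v hs]

lemma gaussMoment_add_two (v : ℝ) (hs : s ≠ 0) (k : ℕ) :
    gaussMoment v s (k + 2)
      = v * gaussMoment v s (k + 1) + (k + 1) * s ^ 2 * gaussMoment v s k := by
  have hrec := integral_pow_add_two_mul_exp_gaussianReal v (s ^ 2).toNNReal k 0
  rw [coe_toNNReal _ (sq_nonneg s)] at hrec
  simpa [gaussMoment_eq_integral_gaussianReal v hs] using hrec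

/-- Nodes of the three-point Gauss–Hermite rule for the normal distribution with mean `v` and
variance `s²`: the roots of the third Hermite polynomial in `(x - v) / s`. -/
noncomputable def gaussHermiteNode (v s : ℝ) : Fin 3 → ℝ := ![v - √3 * s, v, v + √3 * s]

/-- Weights of the three-point Gauss–Hermite rule, in the order of `gaussHermiteNode`. -/
noncomputable def gaussHermiteWeight : Fin 3 → ℝ := ![1 / 6, 2 / 3, 1 / 6]

lemma gaussHermiteWeight_pos (i : Fin 3) : 0 < gaussHermiteWeight i := by
  fin_cases i <;> norm_num [gaussHermiteWeight]

lemma gaussHermiteNode_strictMono (v : ℝ) (hs : 0 < s) : StrictMono (gaussHermiteNode v s) := by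
  have hstep : 0 < √3 * s := by positivity
  refine Fin.strictMono_iff_lt_succ.2 fun i => ?_
  fin_cases i <;> simpa [gaussHermiteNode] using hstep

lemma gaussHermiteNode_mem_Ioo {a : ℝ} (ha : √3 < a) (v : ℝ) (hs : 0 < s) (i : Fin 3) :
    gaussHermiteNode v s i ∈ Set.Ioo (v - a * s) (v + a * s) := by
  have hstep : 0 < √3 * s := by positivity
  have hband : √3 * s < a * s := by gcongr
  fin_cases i <;> constructor <;>
    simp only [gaussHermiteNode, Fin.zero_eta, Fin.mk_one, Fin.reduceFinMk, Matrix.cons_val] <;>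
    linarith

lemma gaussMoment_eq_sum_gaussHermite (v : ℝ) (hs : s ≠ 0) {k : ℕ} (hk : k < 6) :
    gaussMoment v s k = ∑ i, gaussHermiteWeight i * gaussHermiteNode v s i ^ k := by
  have h3 : √3 ^ 2 = 3 := sq_sqrt (by norm_num)
  simp only [Fin.sum_univ_three, gaussHermiteWeight, gaussHermiteNode, Matrix.cons_val]
  interval_cases k <;> simp only [gaussMoment_add_two v hs, gaussMoment_one v hs,
    gaussMoment_zero v hs] <;> push_cast
  · norm_num
  · ring
  · linear_combination -(1 / 3) * s ^ 2 * h3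
  · linear_combination -v * s ^ 2 * h3
  · linear_combination (-2 * v ^ 2 * s ^ 2 - 1 / 3 * (√3 ^ 2 + 3) * s ^ 4) * h3
  · linear_combination (-(10 / 3) * v ^ 3 * s ^ 2 - 5 / 3 * v * (√3 ^ 2 + 3) * s ^ 4) * h3

lemma waveSpeedBounds_gaussMoment {a v dp dm : ℝ} (ha : √3 < a) (hs : 0 < s)
    (hdm : dm ≤ v - a * s) (hdp : v + a * s ≤ dp) :
    WaveSpeedBounds hankelPosDefCone dp dm (fun k : Fin 5 => gaussMoment v s k)
      (fun k : Fin 5 => gaussMoment v s (k + 1)) := by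
  convert waveSpeedBounds_sum_mul_pow gaussHermiteWeight_pos
    (gaussHermiteNode_strictMono v hs).injective
    (fun i => Set.Ioo_subset_Ioo hdm hdp (gaussHermiteNode_mem_Ioo ha v hs i)) using 2 with k k
  · exact gaussMoment_eq_sum_gaussHermite v hs.ne' (by lia)
  · exact gaussMoment_eq_sum_gaussHermite v hs.ne' (by lia)

end GaussHermite

namespace EqmomParams

variable (W : EqmomParams) {a : ℝ}

lemma dp_nonneg (a : ℝ) : 0 ≤ W.dp a := le_max_right _ _

lemma dm_nonpos (a : ℝ) : W.dm a ≤ 0 := min_le_right _ _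

lemma dm_lt_dp (ha : 0 < a) : W.dm a < W.dp a :=
  calc W.dm a ≤ W.v1 - a * W.sig := (min_le_left _ _).trans (min_le_left _ _)
    _ < W.v1 + a * W.sig := by linarith [mul_pos ha W.hsig]
    _ ≤ W.dp a := (le_max_left _ _).trans' (le_max_left _ _)

lemma waveSpeedBounds (ha : √3 < a) {dp dm : ℝ} (hdp : W.dp a ≤ dp) (hdm : dm ≤ W.dm a) :
    WaveSpeedBounds hankelPosDefCone dp dm W.M W.F := by
  obtain ⟨⟨hdp1, hdp2⟩, -⟩ : (W.v1 + a * W.sig ≤ dp ∧ W.v2 + a * W.sig ≤ dp) ∧ 0 ≤ dp := by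
    simpa only [EqmomParams.dp, max_le_iff] using hdp
  obtain ⟨⟨hdm1, hdm2⟩, -⟩ : (dm ≤ W.v1 - a * W.sig ∧ dm ≤ W.v2 - a * W.sig) ∧ dm ≤ 0 := by
    simpa only [EqmomParams.dm, le_min_iff] using hdm
  exact ((waveSpeedBounds_gaussMoment ha W.hsig hdm1 hdp1).smul W.hr1).add
    ((waveSpeedBounds_gaussMoment ha W.hsig hdm2 hdp2).smul W.hr2)

end EqmomParams

/-- realizability of the collisionless HLL finite-volume update for the two-node
Gaussian-EQMOM closure under the CFL conditions `λ(δ⁺ − δ⁻) ≤ 1/2` at both interfaces: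
`H₂(M_new)` is positive definite, where `M_new = ½(M_L⁺ + M_R⁻) − λ(F̂_R − F̂_L)`. -/
theorem eqmom_hll_update_posDef (a lam : ℝ) (ha : Real.sqrt 3 < a) (hlam : 0 < lam)
    (WLm WLp WRm WRp : EqmomParams)
    (dLp dLm dRp dRm : ℝ)
    (hdLp : dLp = max (WLm.dp a) (WLp.dp a))
    (hdLm : dLm = min (WLm.dm a) (WLp.dm a))
    (hdRp : dRp = max (WRm.dp a) (WRp.dp a))
    (hdRm : dRm = min (WRm.dm a) (WRp.dm a))
    (FL FR : Fin 5 → ℝ)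
    (hFL : FL = hllFlux dLp dLm WLm.M WLp.M WLm.F WLp.F)
    (hFR : FR = hllFlux dRp dRm WRm.M WRp.M WRm.F WRp.F)
    (hCFL_L : lam * (dLp - dLm) ≤ 1 / 2)
    (hCFL_R : lam * (dRp - dRm) ≤ 1 / 2) :
    (hankel2 (fun k => (WLp.M k + WRm.M k) / 2 - lam * (FR k - FL k))).PosDef := by
  have ha0 : 0 < a := (sqrt_nonneg 3).trans_lt ha
  subst hdLp hdLm hdRp hdRm hFL hFR
  have hL : (1 / 2 : ℝ) • WLp.M + lam • hllFlux _ _ WLm.M WLp.M WLm.F WLp.F ∈ hankelPosDefCone :=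
    half_smul_add_smul_hllFlux_mem hlam (le_max_of_le_left (WLm.dp_nonneg a))
      (min_le_of_left_le (WLm.dm_nonpos a))
      (min_lt_of_left_lt (lt_max_of_lt_left (WLm.dm_lt_dp ha0))) hCFL_L
      (WLm.waveSpeedBounds ha (le_max_left _ _) (min_le_left _ _))
      (WLp.waveSpeedBounds ha (le_max_right _ _) (min_le_right _ _))
  have hR : (1 / 2 : ℝ) • WRm.M - lam • hllFlux _ _ WRm.M WRp.M WRm.F WRp.F ∈ hankelPosDefCone :=
    half_smul_sub_smul_hllFlux_mem hlam (le_max_of_le_left (WRm.dp_nonneg a))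
      (min_le_of_left_le (WRm.dm_nonpos a))
      (min_lt_of_left_lt (lt_max_of_lt_left (WRm.dm_lt_dp ha0))) hCFL_R
      (WRm.waveSpeedBounds ha (le_max_left _ _) (min_le_left _ _))
      (WRp.waveSpeedBounds ha (le_max_right _ _) (min_le_right _ _))
  rw [← mem_hankelPosDefCone]
  convert hankelPosDefCone.add_mem hL hR using 1
  ext k
  simp only [Pi.add_apply, Pi.sub_apply, Pi.smul_apply, smul_eq_mul]
  ring
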